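/- Let W be a nonnegative real random variable whose tail satisfies x·P(W > x) → 1 as x → ∞, and fix λ ∈ ℝ. Define h : [0,∞) → ℂ by h(x) = exp(iλ·log(1+x)) − 1 − iλ·x·1_{x ≤ 1}. Then the integral ∫_0^∞ h(x)·x^{−2} dx converges absolutely, and α^{−1}·E[h(αW)] → ∫_0^∞ h(x)·x^{−2} dx as α → 0+. -/

import Mathlib

open Real MeasureTheory Set Filter

/-- The compensated characteristic integrand
`h(x) = exp(iλ·log(1+x)) − 1 − iλ·x·1_{x ≤ 1}`. -/
noncomputable def hfun (lam x : ℝ) : ℂ :=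
  Complex.exp (Complex.I * (lam : ℂ) * (Real.log (1 + x) : ℂ)) - 1 -
    Complex.I * (lam : ℂ) * (x : ℂ) * (if x ≤ 1 then 1 else 0)

/-!
Away from its jump of height `iλ` at `1`, `h` is the primitive of a function `k` with
`∫ |k t| / t dt < ∞`. By Fubini, for every `X ≥ 0` with tail `O(1 / t)`,
`E[h(X)] = ∫ k t · P(X > t) dt + iλ · P(X > 1)`, and the same formula holds for the infinite
measure `x⁻² dx`, whose tail is `1 / t`. For `X = α W` the rescaled tail `α⁻¹ P(α W > t)`
converges to `1 / t` and is at most `C / t` uniformly in `α`, so dominated convergence applies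
to the right-hand side.
-/

open scoped Topology ENNReal

section LayerCake

variable {Ω E : Type*} [MeasurableSpace Ω] {μ : Measure Ω} {X : Ω → ℝ}
  [NormedAddCommGroup E] {k : ℝ → E}

lemma integrable_prod_indicator_lt [SFinite μ] (hX : AEMeasurable X μ)
    (hk : AEStronglyMeasurable k (volume.restrict (Ioi 0)))
    (hkX : ∫⁻ t in Ioi 0, ‖k t‖ₑ * μ {ω | t < X ω} ≠ ∞) :
    Integrable ({p : Ω × ℝ | p.2 < X p.1}.indicator fun p ↦ k p.2)
      (μ.prod (volume.restrict (Ioi 0))) := by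
  have hmeas : AEStronglyMeasurable ({p : Ω × ℝ | p.2 < X p.1}.indicator fun p ↦ k p.2)
      (μ.prod (volume.restrict (Ioi 0))) :=
    hk.comp_snd.indicator₀ (nullMeasurableSet_lt measurable_snd.aemeasurable hX.comp_fst)
  refine ⟨hmeas, ?_⟩
  have hslice (t : ℝ) :
      ∫⁻ ω, ‖{p : Ω × ℝ | p.2 < X p.1}.indicator (fun p ↦ k p.2) (ω, t)‖ₑ ∂μ
        = ‖k t‖ₑ * μ {ω | t < X ω} := by
    rw [← lintegral_indicator_const₀ (nullMeasurableSet_lt aemeasurable_const hX)]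
    simp only [enorm_indicator_eq_indicator_enorm]
    rfl
  rw [HasFiniteIntegral, lintegral_prod_symm _ hmeas.enorm]
  simpa only [hslice] using hkX.lt_top

variable [NormedSpace ℝ E]

lemma setIntegral_Ioi_zero_indicator_Iio (k : ℝ → E) (x : ℝ) :
    ∫ t in Ioi 0, (Iio x).indicator k t = ∫ t in Ioc 0 x, k t := by
  rw [setIntegral_indicator measurableSet_Iio, Ioi_inter_Iio, integral_Ioc_eq_integral_Ioo]

lemma integrable_setIntegral_Ioc_comp [SFinite μ] (hX : AEMeasurable X μ)
    (hk : AEStronglyMeasurable k (volume.restrict (Ioi 0)))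
    (hkX : ∫⁻ t in Ioi 0, ‖k t‖ₑ * μ {ω | t < X ω} ≠ ∞) :
    Integrable (fun ω ↦ ∫ t in Ioc 0 (X ω), k t) μ := by
  simp only [← setIntegral_Ioi_zero_indicator_Iio]
  exact (integrable_prod_indicator_lt hX hk hkX).integral_prod_left

lemma integral_setIntegral_Ioc_comp [SFinite μ] [CompleteSpace E] (hX : AEMeasurable X μ)
    (hk : AEStronglyMeasurable k (volume.restrict (Ioi 0)))
    (hkX : ∫⁻ t in Ioi 0, ‖k t‖ₑ * μ {ω | t < X ω} ≠ ∞) :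
    ∫ ω, (∫ t in Ioc 0 (X ω), k t) ∂μ = ∫ t in Ioi 0, μ.real {ω | t < X ω} • k t := by
  have hslice (t : ℝ) :
      ∫ ω, {ω | t < X ω}.indicator (fun _ ↦ k t) ω ∂μ = μ.real {ω | t < X ω} • k t := by
    rw [integral_indicator₀ (nullMeasurableSet_lt aemeasurable_const hX), setIntegral_const]
  simp only [← setIntegral_Ioi_zero_indicator_Iio, ← hslice]
  exact integral_integral_swap (f := fun ω t ↦ (Iio (X ω)).indicator k t)
    (integrable_prod_indicator_lt hX hk hkX)

lemma lintegral_enorm_mul_measure_lt_ne_top {C : ℝ}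
    (hC : ∀ t > 0, μ {ω | t < X ω} ≤ ENNReal.ofReal (C / t))
    (hk : IntegrableOn (fun t ↦ t⁻¹ • k t) (Ioi 0)) :
    ∫⁻ t in Ioi 0, ‖k t‖ₑ * μ {ω | t < X ω} ≠ ∞ := by
  refine ne_top_of_le_ne_top (Integrable.smul C hk).hasFiniteIntegral.ne ?_
  refine setLIntegral_mono_ae' measurableSet_Ioi (ae_of_all _ fun t ht ↦ ?_)
  calc ‖k t‖ₑ * μ {ω | t < X ω}
      ≤ ‖k t‖ₑ * ‖C / t‖ₑ := by gcongr; exact (hC t ht).trans (ofReal_le_enorm _)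
    _ = ‖C • t⁻¹ • k t‖ₑ := by rw [smul_smul, ← div_eq_mul_inv, enorm_smul, mul_comm]

end LayerCake

section Tail

lemma setOf_lt_const_mul {Ω : Type*} {W : Ω → ℝ} {α t : ℝ} (hα : 0 < α) :
    {ω | t < α * W ω} = {ω | t / α < W ω} := by
  simp only [div_lt_iff₀' hα]

variable {Ω : Type*} [MeasurableSpace Ω] {μ : Measure Ω} {W : Ω → ℝ} {α c C t : ℝ}

lemma exists_measure_lt_le_ofReal_div [IsFiniteMeasure μ]
    (hW : Tendsto (fun x ↦ x * μ.real {ω | x < W ω}) atTop (𝓝 c)) :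
    ∃ C, 0 ≤ C ∧ ∀ t > 0, μ {ω | t < W ω} ≤ ENNReal.ofReal (C / t) := by
  obtain ⟨x₀, hx₀⟩ := eventually_atTop.1 (hW.eventually_le_const (lt_add_one c))
  refine ⟨max (c + 1) (|x₀| * μ.real univ), le_max_of_le_right (by positivity), fun t ht ↦ ?_⟩
  rw [← ofReal_measureReal]
  refine ENNReal.ofReal_le_ofReal ((le_div_iff₀' ht).2 ?_)
  rcases le_total x₀ t with h | h
  · exact (hx₀ t h).trans (le_max_left _ _)
  · refine le_max_of_le_right ?_
    gcongr
    exacts [h.trans (le_abs_self x₀), measure_ne_top _ _, subset_univ _]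

lemma measure_lt_const_mul_le_ofReal_div
    (hC : ∀ t > 0, μ {ω | t < W ω} ≤ ENNReal.ofReal (C / t)) (hα : 0 < α) (ht : 0 < t) :
    μ {ω | t < α * W ω} ≤ ENNReal.ofReal (α * C / t) := by
  rw [setOf_lt_const_mul hα, mul_comm α C, ← div_div_eq_mul_div]
  exact hC _ (div_pos ht hα)

lemma inv_mul_measureReal_lt_const_mul_le (hC₀ : 0 ≤ C)
    (hC : ∀ t > 0, μ {ω | t < W ω} ≤ ENNReal.ofReal (C / t)) (hα : 0 < α) (ht : 0 < t) :
    α⁻¹ * μ.real {ω | t < α * W ω} ≤ C * t⁻¹ := by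
  rw [inv_mul_le_iff₀ hα, ← mul_assoc, ← div_eq_mul_inv]
  exact ENNReal.toReal_le_of_le_ofReal (by positivity)
    (measure_lt_const_mul_le_ofReal_div hC hα ht)

lemma tendsto_inv_mul_measureReal_lt_const_mul
    (hW : Tendsto (fun x ↦ x * μ.real {ω | x < W ω}) atTop (𝓝 c)) (ht : 0 < t) :
    Tendsto (fun α ↦ α⁻¹ * μ.real {ω | t < α * W ω}) (𝓝[>] 0) (𝓝 (c * t⁻¹)) := by
  have hscale : Tendsto (fun α ↦ t / α) (𝓝[>] 0) atTop := by
    simpa only [div_eq_mul_inv] using tendsto_inv_nhdsGT_zero.const_mul_atTop ht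
  refine ((hW.comp hscale).mul_const t⁻¹).congr' ?_
  filter_upwards [self_mem_nhdsWithin] with α (hα : 0 < α)
  simp only [Function.comp_apply, setOf_lt_const_mul hα]
  field_simp

end Tail

/-- The Lévy measure `x⁻² dx` on `(0, ∞)`, to which the rescaled laws of `α W` converge in the
sense of tails. -/
noncomputable def invSqMeasure : Measure ℝ :=
  (volume.restrict (Ioi 0)).withDensity fun x ↦ ENNReal.ofReal (x ^ 2)⁻¹

lemma invSqMeasure_setOf_lt {t : ℝ} (ht : 0 < t) :
    invSqMeasure {x | t < x} = ENNReal.ofReal (1 / t) := by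
  have hpow : EqOn (fun x : ℝ ↦ x ^ (-2 : ℝ)) (fun x ↦ (x ^ 2)⁻¹) (Ioi t) := fun x hx ↦ by
    simp only [rpow_neg (ht.trans hx).le, rpow_two]
  have hint : IntegrableOn (fun x : ℝ ↦ (x ^ 2)⁻¹) (Ioi t) :=
    (integrableOn_Ioi_rpow_of_lt (by norm_num) ht).congr_fun hpow measurableSet_Ioi
  change invSqMeasure (Ioi t) = _
  rw [invSqMeasure, withDensity_apply _ measurableSet_Ioi,
    Measure.restrict_restrict_of_subset (Ioi_subset_Ioi ht.le),
    ← ofReal_integral_eq_lintegral_ofReal hint (ae_of_all _ fun x ↦ by positivity),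
    ← setIntegral_congr_fun measurableSet_Ioi hpow, integral_Ioi_rpow_of_lt (by norm_num) ht]
  norm_num [rpow_neg_one]

lemma ae_invSqMeasure_nonneg : ∀ᵐ x ∂invSqMeasure, 0 ≤ x := by
  refine (withDensity_absolutelyContinuous _ _).ae_le ?_
  filter_upwards [ae_restrict_mem measurableSet_Ioi] with x hx using le_of_lt hx

instance : SFinite invSqMeasure := inferInstanceAs (SFinite (Measure.withDensity _ _))

section

variable {E : Type*} [NormedAddCommGroup E] [NormedSpace ℝ E] {h : ℝ → E}

lemma integrable_invSqMeasure_iff :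
    Integrable h invSqMeasure ↔ IntegrableOn (fun x ↦ (x ^ 2)⁻¹ • h x) (Ioi 0) := by
  rw [invSqMeasure, integrable_withDensity_iff_integrable_smul' (by fun_prop)
    (ae_of_all _ fun _ ↦ ENNReal.ofReal_lt_top)]
  simp only [ENNReal.toReal_ofReal (inv_nonneg.2 (sq_nonneg _)), IntegrableOn]

lemma integral_invSqMeasure (h : ℝ → E) :
    ∫ x, h x ∂invSqMeasure = ∫ x in Ioi 0, (x ^ 2)⁻¹ • h x := by
  rw [invSqMeasure, integral_withDensity_eq_integral_toReal_smul (by fun_prop)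
    (ae_of_all _ fun _ ↦ ENNReal.ofReal_lt_top)]
  simp only [ENNReal.toReal_ofReal (inv_nonneg.2 (sq_nonneg _))]

/-- On `[0, ∞)`, the function `h` is the primitive of `k` vanishing at `0` plus a jump of
height `b` at `a`. Integrability of `k` against `dt / t` is part of the notion: it is what makes
`h` integrable against any measure whose tail is `O(1 / t)`. -/
structure IsJumpPrimitive (h k : ℝ → E) (a : ℝ) (b : E) : Prop where
  pos : 0 < a
  integrableOn_inv_smul : IntegrableOn (fun t ↦ t⁻¹ • k t) (Ioi 0)
  eq_add_indicator : ∀ x, 0 ≤ x → h x = (∫ t in Ioc 0 x, k t) + (Ioi a).indicator (fun _ ↦ b) x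

namespace IsJumpPrimitive

variable {k : ℝ → E} {a : ℝ} {b : E} {Ω : Type*} [MeasurableSpace Ω] {μ : Measure Ω}
  {X W : Ω → ℝ} {c C : ℝ}

lemma aestronglyMeasurable (hh : IsJumpPrimitive h k a b) :
    AEStronglyMeasurable k (volume.restrict (Ioi 0)) := by
  refine (aestronglyMeasurable_id.smul hh.integrableOn_inv_smul.1).congr ?_
  filter_upwards [ae_restrict_mem measurableSet_Ioi] with t (ht : 0 < t)
  exact smul_inv_smul₀ ht.ne' (k t)

lemma ae_comp_eq (hh : IsJumpPrimitive h k a b) (hX₀ : ∀ᵐ ω ∂μ, 0 ≤ X ω) :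
    (fun ω ↦ h (X ω)) =ᵐ[μ]
      fun ω ↦ (∫ t in Ioc 0 (X ω), k t) + {ω | a < X ω}.indicator (fun _ ↦ b) ω := by
  filter_upwards [hX₀] with ω hω using hh.eq_add_indicator _ hω

lemma integrable_indicator_comp (hh : IsJumpPrimitive h k a b) (hX : AEMeasurable X μ)
    (hC : ∀ t > 0, μ {ω | t < X ω} ≤ ENNReal.ofReal (C / t)) :
    Integrable ({ω | a < X ω}.indicator fun _ ↦ b) μ := by
  have hfin : μ {ω | a < X ω} ≠ ∞ := ne_top_of_le_ne_top ENNReal.ofReal_ne_top (hC a hh.pos)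
  exact (integrableOn_const hfin).integrable_indicator₀
    (nullMeasurableSet_lt aemeasurable_const hX)

lemma integrable_comp [SFinite μ] (hh : IsJumpPrimitive h k a b) (hX : AEMeasurable X μ)
    (hX₀ : ∀ᵐ ω ∂μ, 0 ≤ X ω) (hC : ∀ t > 0, μ {ω | t < X ω} ≤ ENNReal.ofReal (C / t)) :
    Integrable (fun ω ↦ h (X ω)) μ :=
  ((integrable_setIntegral_Ioc_comp hX hh.aestronglyMeasurable
    (lintegral_enorm_mul_measure_lt_ne_top hC hh.integrableOn_inv_smul)).add
      (hh.integrable_indicator_comp hX hC)).congr (hh.ae_comp_eq hX₀).symm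

lemma integral_comp [SFinite μ] [CompleteSpace E] (hh : IsJumpPrimitive h k a b)
    (hX : AEMeasurable X μ) (hX₀ : ∀ᵐ ω ∂μ, 0 ≤ X ω)
    (hC : ∀ t > 0, μ {ω | t < X ω} ≤ ENNReal.ofReal (C / t)) :
    ∫ ω, h (X ω) ∂μ
      = (∫ t in Ioi 0, μ.real {ω | t < X ω} • k t) + μ.real {ω | a < X ω} • b := by
  have hkX := lintegral_enorm_mul_measure_lt_ne_top hC hh.integrableOn_inv_smul
  rw [integral_congr_ae (hh.ae_comp_eq hX₀),
    integral_add (integrable_setIntegral_Ioc_comp hX hh.aestronglyMeasurable hkX)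
      (hh.integrable_indicator_comp hX hC),
    integral_setIntegral_Ioc_comp hX hh.aestronglyMeasurable hkX,
    integral_indicator₀ (nullMeasurableSet_lt aemeasurable_const hX), setIntegral_const]

lemma integrable_invSqMeasure (hh : IsJumpPrimitive h k a b) : Integrable h invSqMeasure :=
  hh.integrable_comp aemeasurable_id ae_invSqMeasure_nonneg fun _ ht ↦
    (invSqMeasure_setOf_lt ht).le

lemma integral_invSqMeasure [CompleteSpace E] (hh : IsJumpPrimitive h k a b) :
    ∫ x, h x ∂invSqMeasure = (∫ t in Ioi 0, t⁻¹ • k t) + a⁻¹ • b := by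
  have htail {t : ℝ} (ht : 0 < t) : invSqMeasure.real {x | t < x} = t⁻¹ := by
    rw [measureReal_def, invSqMeasure_setOf_lt ht, ENNReal.toReal_ofReal (by positivity),
      one_div]
  rw [hh.integral_comp (X := fun x ↦ x) aemeasurable_id ae_invSqMeasure_nonneg
    fun _ ht ↦ (invSqMeasure_setOf_lt ht).le, htail hh.pos]
  congr 1
  exact setIntegral_congr_fun measurableSet_Ioi fun t ht ↦ by rw [htail ht]

lemma tendsto_setIntegral_tail_smul [IsFiniteMeasure μ] (hh : IsJumpPrimitive h k a b)
    (hW : Tendsto (fun x ↦ x * μ.real {ω | x < W ω}) atTop (𝓝 c)) :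
    Tendsto (fun α ↦ ∫ t in Ioi 0, (α⁻¹ * μ.real {ω | t < α * W ω}) • k t) (𝓝[>] 0)
      (𝓝 (∫ t in Ioi 0, (c * t⁻¹) • k t)) := by
  obtain ⟨C, hC₀, hC⟩ := exists_measure_lt_le_ofReal_div hW
  refine tendsto_integral_filter_of_dominated_convergence (fun t ↦ C * ‖t⁻¹ • k t‖) ?_ ?_
    (hh.integrableOn_inv_smul.norm.const_mul C) ?_
  · refine Eventually.of_forall fun α ↦ ?_
    have htail : Antitone fun t ↦ μ.real {ω | t < α * W ω} := fun s t hst ↦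
      measureReal_mono fun ω (hω : t < α * W ω) ↦ hst.trans_lt hω
    exact (htail.measurable.const_mul α⁻¹).aestronglyMeasurable.smul hh.aestronglyMeasurable
  · filter_upwards [self_mem_nhdsWithin] with α (hα : 0 < α)
    filter_upwards [ae_restrict_mem measurableSet_Ioi] with t (ht : 0 < t)
    rw [norm_smul, norm_smul, ← mul_assoc, norm_of_nonneg (by positivity),
      norm_of_nonneg (by positivity)]
    exact mul_le_mul_of_nonneg_right (inv_mul_measureReal_lt_const_mul_le hC₀ hC hα ht)
      (norm_nonneg _)
  · filter_upwards [ae_restrict_mem measurableSet_Ioi] with t ht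
    exact (tendsto_inv_mul_measureReal_lt_const_mul hW ht).smul_const (k t)

theorem tendsto_inv_smul_integral_comp_const_mul [IsFiniteMeasure μ] [CompleteSpace E]
    (hh : IsJumpPrimitive h k a b) (hWm : AEMeasurable W μ) (hW₀ : ∀ᵐ ω ∂μ, 0 ≤ W ω)
    (hW : Tendsto (fun x ↦ x * μ.real {ω | x < W ω}) atTop (𝓝 c)) :
    Tendsto (fun α : ℝ ↦ α⁻¹ • ∫ ω, h (α * W ω) ∂μ) (𝓝[>] 0)
      (𝓝 (c • ∫ x, h x ∂invSqMeasure)) := by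
  obtain ⟨C, -, hC⟩ := exists_measure_lt_le_ofReal_div hW
  have hlimit : c • ∫ x, h x ∂invSqMeasure
      = (∫ t in Ioi 0, (c * t⁻¹) • k t) + (c * a⁻¹) • b := by
    simp only [hh.integral_invSqMeasure, smul_add, ← integral_smul, smul_smul]
  rw [hlimit]
  refine ((hh.tendsto_setIntegral_tail_smul hW).add
    ((tendsto_inv_mul_measureReal_lt_const_mul hW hh.pos).smul_const b)).congr' ?_
  filter_upwards [self_mem_nhdsWithin] with α (hα : 0 < α)
  rw [hh.integral_comp (hWm.const_mul α)
    (hW₀.mono fun ω hω ↦ mul_nonneg hα.le hω)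
    fun t ht ↦ measure_lt_const_mul_le_ofReal_div hC hα ht]
  simp only [smul_add, ← integral_smul, smul_smul]

end IsJumpPrimitive

end

section CharacteristicIntegrand

/-- The derivative of `hfun lam` on `(0, ∞)` away from the jump at `1`; its value at `1` is
immaterial, as it only enters under integrals. -/
noncomputable def hfunDeriv (lam t : ℝ) : ℂ :=
  Complex.I * lam * (Complex.exp (Complex.I * lam * log (1 + t)) / (1 + t : ℝ)) -
    (Iic 1).indicator (fun _ ↦ Complex.I * lam) t

lemma measurable_hfunDeriv (lam : ℝ) : Measurable (hfunDeriv lam) :=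
  Measurable.sub (by fun_prop) (measurable_const.indicator measurableSet_Iic)

lemma hasDerivAt_exp_I_mul_log_one_add (lam : ℝ) {t : ℝ} (ht : -1 < t) :
    HasDerivAt (fun t : ℝ ↦ Complex.exp (Complex.I * lam * log (1 + t)))
      (Complex.I * lam * (Complex.exp (Complex.I * lam * log (1 + t)) / (1 + t : ℝ))) t := by
  have hlog : HasDerivAt (fun t ↦ log (1 + t)) (1 / (1 + t)) t :=
    ((hasDerivAt_id t).const_add 1).log (by simp only [id]; linarith)
  convert (hlog.ofReal_comp.const_mul (Complex.I * lam)).cexp using 1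
  push_cast
  ring

lemma continuousOn_exp_I_mul_log_one_add_div (lam : ℝ) :
    ContinuousOn (fun t : ℝ ↦ Complex.I * lam *
      (Complex.exp (Complex.I * lam * log (1 + t)) / (1 + t : ℝ))) (Ioi (-1)) := by
  refine continuousOn_const.mul (ContinuousOn.div (fun t ht ↦ ?_) (by fun_prop) fun t ht ↦ ?_)
  · exact (hasDerivAt_exp_I_mul_log_one_add lam ht).continuousAt.continuousWithinAt
  · have : 1 + t ≠ 0 := by linarith [mem_Ioi.1 ht]
    exact_mod_cast this

lemma setIntegral_Ioc_indicator_Iic_one (z : ℂ) {x : ℝ} (hx : 0 ≤ x) :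
    ∫ t in Ioc 0 x, (Iic 1).indicator (fun _ ↦ z) t = (min x 1 : ℝ) * z := by
  rw [setIntegral_indicator measurableSet_Iic, Ioc_inter_Iic, setIntegral_const,
    Real.volume_real_Ioc_of_le (by positivity), sub_zero, Complex.real_smul]

lemma hfun_eq_setIntegral_add_indicator (lam : ℝ) {x : ℝ} (hx : 0 ≤ x) :
    hfun lam x =
      (∫ t in Ioc 0 x, hfunDeriv lam t) + (Ioi 1).indicator (fun _ ↦ Complex.I * lam) x := by
  have hsub : uIcc 0 x ⊆ Ioi (-1) := fun t ht ↦ by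
    rw [uIcc_of_le hx] at ht
    exact neg_one_lt_zero.trans_le ht.1
  have hint := ((continuousOn_exp_I_mul_log_one_add_div lam).mono hsub).intervalIntegrable
    (μ := volume)
  have hFTC := intervalIntegral.integral_eq_sub_of_hasDerivAt
    (fun t ht ↦ hasDerivAt_exp_I_mul_log_one_add lam (hsub ht)) hint
  rw [intervalIntegral.integral_of_le hx] at hFTC
  simp only [hfunDeriv]
  rw [integral_sub hint.1 ((integrable_const _).indicator measurableSet_Iic), hFTC,
    setIntegral_Ioc_indicator_Iic_one _ hx, hfun]
  rcases le_or_gt x 1 with h | h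
  · rw [if_pos h, min_eq_left h, indicator_of_notMem (notMem_Ioi.2 h)]
    simp only [add_zero, log_one, Complex.ofReal_zero, mul_zero, Complex.exp_zero]
    ring
  · simp [h, h.le]

lemma norm_exp_I_mul_log_one_add_sub_one_le (lam : ℝ) {t : ℝ} (ht : 0 ≤ t) :
    ‖Complex.exp (Complex.I * lam * log (1 + t)) - 1‖ ≤ |lam| * t := by
  have hlog : |log (1 + t)| ≤ t := by
    rw [abs_of_nonneg (log_nonneg (by linarith))]
    linarith [log_le_sub_one_of_pos (show 0 < 1 + t by linarith)]
  calc ‖Complex.exp (Complex.I * lam * log (1 + t)) - 1‖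
      ≤ ‖lam * log (1 + t)‖ := by
        rw [mul_assoc, ← Complex.ofReal_mul]
        exact norm_exp_I_mul_ofReal_sub_one_le
    _ ≤ |lam| * t := by
        rw [norm_mul, norm_eq_abs, norm_eq_abs]
        gcongr

lemma norm_hfunDeriv_le_of_mem_Ioc (lam : ℝ) {t : ℝ} (ht : t ∈ Ioc 0 1) :
    ‖hfunDeriv lam t‖ ≤ |lam| * (|lam| + 1) * t := by
  obtain ⟨ht₀, ht₁⟩ := ht
  have hne : ((1 + t : ℝ) : ℂ) ≠ 0 := by exact_mod_cast (by positivity : 1 + t ≠ 0)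
  have hform : hfunDeriv lam t =
      Complex.I * lam * ((Complex.exp (Complex.I * lam * log (1 + t)) - 1 - t) / (1 + t : ℝ)) := by
    rw [hfunDeriv, indicator_of_mem (mem_Iic.2 ht₁), ← mul_sub_one, div_sub_one hne]
    push_cast
    ring
  have hnum : ‖Complex.exp (Complex.I * lam * log (1 + t)) - 1 - t‖ ≤ (|lam| + 1) * t :=
    calc _ ≤ ‖Complex.exp (Complex.I * lam * log (1 + t)) - 1‖ + ‖(t : ℂ)‖ := norm_sub_le _ _
      _ ≤ |lam| * t + t := by
        rw [Complex.norm_of_nonneg ht₀.le]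
        gcongr
        exact norm_exp_I_mul_log_one_add_sub_one_le lam ht₀.le
      _ = (|lam| + 1) * t := by ring
  rw [hform, norm_mul, norm_mul, Complex.norm_I, one_mul, Complex.norm_real, norm_eq_abs,
    norm_div, Complex.norm_of_nonneg (by positivity), mul_assoc |lam|]
  refine mul_le_mul_of_nonneg_left ?_ (abs_nonneg lam)
  exact (div_le_self (norm_nonneg _) (le_add_of_nonneg_right ht₀.le)).trans hnum

lemma norm_hfunDeriv_le_of_one_lt (lam : ℝ) {t : ℝ} (ht : 1 < t) :
    ‖hfunDeriv lam t‖ ≤ |lam| * t⁻¹ := by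
  have hexp : ‖Complex.exp (Complex.I * lam * log (1 + t))‖ = 1 := by
    rw [mul_assoc, ← Complex.ofReal_mul, Complex.norm_exp_I_mul_ofReal]
  rw [hfunDeriv, indicator_of_notMem (notMem_Iic.2 ht), sub_zero, norm_mul, norm_mul,
    Complex.norm_I, one_mul, Complex.norm_real, norm_eq_abs, norm_div, hexp,
    Complex.norm_of_nonneg (by linarith), one_div]
  gcongr
  linarith

lemma integrableOn_inv_smul_hfunDeriv (lam : ℝ) :
    IntegrableOn (fun t ↦ t⁻¹ • hfunDeriv lam t) (Ioi 0) := by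
  have hmeas : Measurable fun t : ℝ ↦ t⁻¹ • hfunDeriv lam t :=
    measurable_inv.smul (measurable_hfunDeriv lam)
  rw [← Ioc_union_Ioi_eq_Ioi zero_le_one]
  refine IntegrableOn.union ?_ ?_
  · refine Measure.integrableOn_of_bounded (M := |lam| * (|lam| + 1)) measure_Ioc_lt_top.ne
      hmeas.aestronglyMeasurable ?_
    filter_upwards [ae_restrict_mem measurableSet_Ioc] with t ht
    rw [norm_smul, norm_of_nonneg (inv_nonneg.2 ht.1.le), inv_mul_le_iff₀ ht.1, mul_comm t]
    exact norm_hfunDeriv_le_of_mem_Ioc lam ht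
  · refine ((integrableOn_Ioi_rpow_of_lt (a := -2) (by norm_num) one_pos).const_mul |lam|).mono'
      hmeas.aestronglyMeasurable ?_
    filter_upwards [ae_restrict_mem measurableSet_Ioi] with t (ht : 1 < t)
    have ht₀ : 0 < t := one_pos.trans ht
    rw [norm_smul, norm_of_nonneg (inv_nonneg.2 ht₀.le), rpow_neg ht₀.le, rpow_two, sq, mul_inv,
      mul_left_comm]
    gcongr
    exact norm_hfunDeriv_le_of_one_lt lam ht

lemma isJumpPrimitive_hfun (lam : ℝ) :
    IsJumpPrimitive (hfun lam) (hfunDeriv lam) 1 (Complex.I * lam) where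
  pos := one_pos
  integrableOn_inv_smul := integrableOn_inv_smul_hfunDeriv lam
  eq_add_indicator _ hx := hfun_eq_setIntegral_add_indicator lam hx

end CharacteristicIntegrand

theorem stmt19_general {Ω : Type*} [MeasurableSpace Ω] {μ : Measure Ω} [IsFiniteMeasure μ]
    {W : Ω → ℝ} (hWm : AEMeasurable W μ) (hW₀ : ∀ᵐ ω ∂μ, 0 ≤ W ω) {c : ℝ}
    (hW : Tendsto (fun x ↦ x * μ.real {ω | x < W ω}) atTop (𝓝 c)) (lam : ℝ) :
    IntegrableOn (fun x : ℝ ↦ hfun lam x / (x : ℂ) ^ 2) (Ioi 0) ∧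
      Tendsto (fun α : ℝ ↦ (α : ℂ)⁻¹ * ∫ ω, hfun lam (α * W ω) ∂μ) (𝓝[>] 0)
        (𝓝 (c * ∫ x in Ioi (0 : ℝ), hfun lam x / (x : ℂ) ^ 2)) := by
  have hh := isJumpPrimitive_hfun lam
  have hdensity (x : ℝ) : hfun lam x / (x : ℂ) ^ 2 = (x ^ 2)⁻¹ • hfun lam x := by
    rw [Complex.real_smul, div_eq_inv_mul, Complex.ofReal_inv, Complex.ofReal_pow]
  simp only [hdensity, ← Complex.ofReal_inv, ← Complex.real_smul, ← integral_invSqMeasure]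
  exact ⟨integrable_invSqMeasure_iff.1 hh.integrable_invSqMeasure,
    hh.tendsto_inv_smul_integral_comp_const_mul hWm hW₀ hW⟩

/-- If `W ≥ 0` satisfies `x·P(W > x) → 1` as `x → ∞`, then `∫_0^∞ h(x)/x² dx`
converges absolutely and `α⁻¹·E[h(αW)] → ∫_0^∞ h(x)/x² dx` as `α → 0+`. -/
theorem stmt19 {Ω : Type*} [MeasureSpace Ω]
    (hP : IsProbabilityMeasure (volume : Measure Ω))
    (W : Ω → ℝ) (hW : Measurable W) (hWnonneg : ∀ ω, 0 ≤ W ω)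
    (htail : Filter.Tendsto (fun x : ℝ => x * (volume {ω | x < W ω}).toReal)
      Filter.atTop (nhds 1))
    (lam : ℝ) :
    MeasureTheory.IntegrableOn (fun x : ℝ => hfun lam x / (x : ℂ)^2) (Set.Ioi 0) ∧
    Filter.Tendsto (fun α : ℝ => (α : ℂ)⁻¹ * ∫ ω, hfun lam (α * W ω))
      (nhdsWithin 0 (Set.Ioi 0))
      (nhds (∫ x in Set.Ioi (0:ℝ), hfun lam x / (x : ℂ)^2)) := by
  simpa using stmt19_general hW.aemeasurable (ae_of_all _ hWnonneg) htail lam
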